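/- arXiv:1010.4562 — 4 statements merged into one kernel-verified Lean document; each statement's English description precedes it below -/
import Mathlib

section
/- For every integer n ≥ 1, when f^n_{x,y}(x) ∈ ℤ[x,y] is written as a polynomial in x, the coefficient of x^{3^n} equals (-2)^{3^{n-1}}; in particular this coefficient is congruent to 1 modulo 3. -/
/-!
Evaluating at `z = x` turns the iteration into the recursion
`P ↦ P ^ 3 - 3 x ^ 2 P + y` on `ℤ[y][x]`. The first iterate is `-2 x ^ 3 + y`; from there on, if
`P` has `x`-degree at most `3 ^ n` with `n ≥ 1`, then `3 x ^ 2 P` has degree at most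
`3 ^ n + 2 < 3 ^ (n + 1)`, so only `P ^ 3` reaches degree `3 ^ (n + 1)` and the top coefficient is
simply cubed (`fnx_succ_natDegree_le_and_coeff`). The congruence follows from `-2 ≡ 1` modulo `3`.
-/

noncomputable section

/-- The polynomial ring ℤ[y]. -/
abbrev Ry : Type := Polynomial ℤ

/-- The polynomial ring ℤ[x,y] = (ℤ[y])[x], with `x` the outer variable. -/
abbrev Rxy : Type := Polynomial Ry

/-- The element `x ∈ ℤ[x,y]`. -/
def xP : Rxy := Polynomial.X

/-- The element `y ∈ ℤ[x,y]`. -/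
def yP : Rxy := Polynomial.C Polynomial.X

/-- `f_{x,y}(z) = z^3 - 3x^2 z + y`, as a polynomial in `z` with coefficients in `ℤ[x,y]`. -/
def fxy : Polynomial Rxy :=
  Polynomial.X ^ 3 - Polynomial.C (3 * xP ^ 2) * Polynomial.X + Polynomial.C yP

/-- The `n`-th iterate `f^n_{x,y}(z)` (in the variable `z`). -/
def fIter : ℕ → Polynomial Rxy
  | 0 => Polynomial.X
  | n + 1 => fxy.comp (fIter n)

/-- `f^n_{x,y}(x)`, the `n`-th iterate evaluated at `z = x`, an element of `ℤ[x,y]`. -/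
def fnx (n : ℕ) : Rxy := (fIter n).eval xP

/-- The coefficient `a_k(y) ∈ ℤ[y]` of `x^(3^n - k)` in `f^n_{x,y}(x)`. -/
def a (n k : ℕ) : Ry := (fnx n).coeff (3 ^ n - k)

theorem fnx_succ (n : ℕ) : fnx (n + 1) =
    fnx n ^ 3 - 3 * Polynomial.X ^ 2 * fnx n + Polynomial.C Polynomial.X := by
  simp [fnx, fIter, fxy, xP, yP]

theorem fnx_one : fnx 1 =
    Polynomial.C (Polynomial.C (-2)) * Polynomial.X ^ 3 + Polynomial.C Polynomial.X := by
  have h0 : fnx 0 = Polynomial.X := by simp [fnx, fIter, xP]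
  have h2 : (Polynomial.C (Polynomial.C (-2)) : Rxy) = -2 := by
    rw [map_neg, map_neg, map_ofNat, map_ofNat]
  rw [fnx_succ, h0, h2]
  ring

/-- The degree bound is carried along with the coefficient because it is what makes the
coefficient of `x ^ 3 ^ (n + 1)` multiplicative under cubing. -/
theorem fnx_succ_natDegree_le_and_coeff (n : ℕ) :
    (fnx (n + 1)).natDegree ≤ 3 ^ (n + 1) ∧
      (fnx (n + 1)).coeff (3 ^ (n + 1)) = Polynomial.C ((-2 : ℤ) ^ 3 ^ n) := by
  induction n with
  | zero =>
    rw [zero_add, fnx_one]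
    refine ⟨by compute_degree; norm_num, ?_⟩
    rw [Polynomial.coeff_add, Polynomial.coeff_C_mul_X_pow, Polynomial.coeff_C]
    norm_num
  | succ n ih =>
    obtain ⟨hdeg, hcoeff⟩ := ih
    have hm : 3 ≤ 3 ^ (n + 1) := Nat.le_self_pow (Nat.succ_ne_zero n) 3
    have hpow : 3 ^ (n + 1 + 1) = 3 * 3 ^ (n + 1) := by ring
    rw [fnx_succ (n + 1), hpow]
    generalize fnx (n + 1) = P at *
    generalize hM : 3 ^ (n + 1) = M at *
    have hcube : (P ^ 3).natDegree ≤ 3 * M := Polynomial.natDegree_pow_le_of_le 3 hdeg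
    have hmid : (3 * Polynomial.X ^ 2 * P).natDegree ≤ 2 + M := by
      refine Polynomial.natDegree_mul_le_of_le ?_ hdeg
      compute_degree
    have hlt : (3 * Polynomial.X ^ 2 * P).natDegree < 3 * M := by omega
    have hC : (Polynomial.C Polynomial.X : Rxy).natDegree < 3 * M := by
      rw [Polynomial.natDegree_C]; omega
    refine ⟨Polynomial.natDegree_add_le_of_degree_le
      (Polynomial.natDegree_sub_le_of_le hcube hlt.le |>.trans (max_self _).le) hC.le, ?_⟩
    rw [Polynomial.coeff_add, Polynomial.coeff_sub, Polynomial.coeff_eq_zero_of_natDegree_lt hlt,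
      Polynomial.coeff_eq_zero_of_natDegree_lt hC, Polynomial.coeff_pow_of_natDegree_le hdeg,
      hcoeff, sub_zero, add_zero, ← map_pow, ← pow_mul, ← hM, pow_succ 3 n]

/-- For `n ≥ 1`, the coefficient of `x^(3^n)` in `f^n_{x,y}(x)` equals the constant
`(-2)^(3^(n-1))`, and this integer is congruent to `1` modulo `3`. -/
theorem leading_x_coefficient (n : ℕ) (hn : 1 ≤ n) :
    a n 0 = Polynomial.C ((-2 : ℤ) ^ 3 ^ (n - 1)) ∧
      (-2 : ℤ) ^ 3 ^ (n - 1) ≡ 1 [ZMOD 3] := by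
  obtain ⟨m, rfl⟩ := Nat.exists_eq_add_of_le' hn
  refine ⟨(fnx_succ_natDegree_le_and_coeff m).2, ?_⟩
  have h : (-2 : ℤ) ≡ 1 [ZMOD 3] := by decide
  simpa using h.pow (3 ^ (m + 1 - 1))
end
end

section
/- For all integers n, m ≥ 1, in 𝔽₃[x,y] one has the congruences F^{(n)}(x,y) ≡ x^{3^n} - x + y + y^3 + y^9 + ⋯ + y^{3^{n-1}} (mod 3) and G^{(m)}(x,y) ≡ -x^{3^m} + x + y + y^3 + y^9 + ⋯ + y^{3^{m-1}} (mod 3). -/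
/-! Modulo 3 the term `3x²z` vanishes, so `f` reduces to `z ↦ z³ + y`. Cubing is additive in
characteristic 3, hence each iteration cubes the power of the starting point and shifts the sum
`y + y³ + ⋯ + y^(3^(n-1))` by one step before adding `y`. Both congruences are the resulting
formula for the iterates, at the starting points `x` and `-x`, the sign surviving because
`3 ^ m` is odd. -/

noncomputable section

/-- The ring homomorphism `ℤ[x,y] → ℤ[x,y]` substituting `-x` for `x`. -/
def negx : Rxy →+* Rxy :=
  (Polynomial.aeval (-Polynomial.X : Rxy) : Polynomial Ry →ₐ[Ry] Rxy).toRingHom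

/-- `F^(n)(x,y) = f^n_{x,y}(x) - x ∈ ℤ[x,y]`. -/
def F (n : ℕ) : Rxy := fnx n - xP

/-- `G^(m)(x,y) = f^m_{x,y}(-x) + x ∈ ℤ[x,y]`. -/
def G (m : ℕ) : Rxy := (fIter m).eval (-xP) + xP

/-- Reduction of coefficients modulo 3: `ℤ[x,y] → 𝔽₃[x,y]`. -/
def red : Rxy →+* Polynomial (Polynomial (ZMod 3)) :=
  Polynomial.mapRingHom (Polynomial.mapRingHom (Int.castRingHom (ZMod 3)))

lemma red_xP : red xP = Polynomial.X := by simp [red, xP]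

lemma red_yP : red yP = Polynomial.C Polynomial.X := by simp [red, yP]

/-- The reduction modulo 3 of `f` is the map `z ↦ z³ + y`. -/
lemma red_eval_fxy (w : Rxy) :
    red (fxy.eval w) = red w ^ 3 + Polynomial.C Polynomial.X := by
  have h3 : red 3 = 0 := by
    rw [map_ofNat]
    exact_mod_cast CharP.cast_eq_zero (Polynomial (Polynomial (ZMod 3))) 3
  simp [fxy, red_yP, h3]

/-- The reduction modulo 3 of the iterates of `f` at an arbitrary starting point. -/
lemma red_eval_fIter (w : Rxy) (n : ℕ) :
    red ((fIter n).eval w) = red w ^ 3 ^ n +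
      Polynomial.C (∑ i ∈ Finset.range n, (Polynomial.X : Polynomial (ZMod 3)) ^ 3 ^ i) := by
  induction n with
  | zero => simp [fIter]
  | succ n ih =>
    rw [fIter, Polynomial.eval_comp, red_eval_fxy, ih, add_pow_char, Finset.sum_range_succ',
      ← Polynomial.C_pow, sum_pow_char]
    simp only [← pow_mul, ← pow_succ, pow_zero, pow_one, Polynomial.C_add, add_assoc]

/-- For `n, m ≥ 1`, in `𝔽₃[x,y]` one has
`F^(n)(x,y) ≡ x^(3^n) - x + y + y^3 + ⋯ + y^(3^(n-1)) (mod 3)` and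
`G^(m)(x,y) ≡ -x^(3^m) + x + y + y^3 + ⋯ + y^(3^(m-1)) (mod 3)`. -/
theorem F_G_mod_three (n m : ℕ) (hn : 1 ≤ n) (hm : 1 ≤ m) :
    red (F n) =
      Polynomial.X ^ 3 ^ n - Polynomial.X +
        Polynomial.C (∑ i ∈ Finset.range n, (Polynomial.X : Polynomial (ZMod 3)) ^ 3 ^ i) ∧
    red (G m) =
      -Polynomial.X ^ 3 ^ m + Polynomial.X +
        Polynomial.C (∑ i ∈ Finset.range m, (Polynomial.X : Polynomial (ZMod 3)) ^ 3 ^ i) := by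
  refine ⟨?_, ?_⟩
  · rw [F, fnx, map_sub, red_eval_fIter, red_xP]
    ring
  · have hodd : Odd (3 ^ m) := Odd.pow (by decide)
    have hneg := hodd.neg_pow (Polynomial.X : Polynomial (Polynomial (ZMod 3)))
    rw [G, map_add, red_eval_fIter, map_neg, red_xP]
    linear_combination hneg
end
end

section
/- Let p be a prime, let m, n ≥ 1 be integers, let d = gcd(m,n), and work in the polynomial ring K[T] where K is a field of characteristic p containing 𝔽_{p^{lcm(n,m)}}. Let φ(T) = ∏_{w ∈ 𝔽_{p^n} + 𝔽_{p^m}} (T - w), the monic polynomial whose simple roots are the elements of the additive subgroup 𝔽_{p^n} + 𝔽_{p^m} of K. Then φ(T)^{p^d} - φ(T) = (T^{p^m} - T)^{p^n} - (T^{p^m} - T). -/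
/-!
Put `q = p ^ d` with `d = gcd m n`, and `f = T ^ p ^ m - T`. The point is the closed form
`φ = ∑ i < n / d, f ^ q ^ i`; raising it to the power `q` shifts the sum by one step, so that
`φ ^ q - φ` telescopes to `f ^ p ^ n - f` (`trace_pow_sub`).

For the closed form (`prod_eq_trace`), let `ψ` be the sum. It is monic of degree
`p ^ (m + n - d)` and additive. It vanishes on `𝔽_(p^m)` because `f` does. For `u ∈ 𝔽_(p^n)`,
the trace `s = ∑ i < n / d, u ^ q ^ i` satisfies `s ^ q = s` by the same telescoping, hence
`s ^ p ^ m = s`, and `ψ u = s ^ p ^ m - s = 0`. So `ψ` vanishes on `𝔽_(p^n) + 𝔽_(p^m)`. This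
sumset has at least `p ^ (m + n - d)` elements, since the fibres of addition are translates of
`𝔽_(p^n) ∩ 𝔽_(p^m)`, whose elements are roots of `T ^ q - T`. Hence the monic polynomials
`φ ∣ ψ` have the same degree and agree.
-/

open Polynomial

/-- The telescoping identity behind the closed form: for `n = d * b` and `x ∈ 𝔽_(p^n)` it says that
the trace of `x` lies in `𝔽_(p^d)`. -/
theorem trace_pow_sub {R : Type*} [CommRing R] (p : ℕ) [Fact p.Prime] [CharP R p]
    (d b : ℕ) (x : R) :
    (∑ i ∈ Finset.range b, x ^ (p ^ d) ^ i) ^ p ^ d - ∑ i ∈ Finset.range b, x ^ (p ^ d) ^ i =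
      x ^ (p ^ d) ^ b - x := by
  rw [sum_pow_char_pow p d, ← Finset.sum_sub_distrib]
  have h := Finset.sum_range_sub (fun i => x ^ (p ^ d) ^ i) b
  simpa only [pow_succ (p ^ d), pow_mul x, pow_zero, pow_one] using h

theorem iterate_pow_fixed {M : Type*} [Monoid M] {x : M} {q : ℕ} (h : x ^ q = x) (a : ℕ) :
    x ^ q ^ a = x := by
  induction a with
  | zero => simp
  | succ a ih => rw [pow_succ, pow_mul, ih, h]

theorem pow_gcd_fixed {M : Type*} [Monoid M] {x : M} {p n m : ℕ} (hn : x ^ p ^ n = x)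
    (hm : x ^ p ^ m = x) : x ^ p ^ Nat.gcd m n = x := by
  have key : ∀ k, (fun y : M => y ^ p)^[k] x = x ^ p ^ k := fun k => by
    rw [pow_iterate]
  have h1 : Function.IsPeriodicPt (fun y : M => y ^ p) n x := (key n).trans hn
  have h2 : Function.IsPeriodicPt (fun y : M => y ^ p) m x := (key m).trans hm
  exact (key _).symm.trans (h2.gcd h1)

theorem monic_natDegree_sum_pow {K : Type*} [Field K] {f : K[X]} (hf : f.Monic)
    (hf0 : 0 < f.natDegree) {q : ℕ} (hq : 1 < q) (k : ℕ) :
    (∑ i ∈ Finset.range (k + 1), f ^ q ^ i).Monic ∧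
      (∑ i ∈ Finset.range (k + 1), f ^ q ^ i).natDegree = q ^ k * f.natDegree := by
  induction k with
  | zero => simpa using hf
  | succ k ih =>
    obtain ⟨h1, h2⟩ := ih
    rw [Finset.sum_range_succ]
    have h3 : (f ^ q ^ (k + 1)).natDegree = q ^ (k + 1) * f.natDegree := hf.natDegree_pow _
    have hlt : (∑ i ∈ Finset.range (k + 1), f ^ q ^ i).natDegree
        < (f ^ q ^ (k + 1)).natDegree := by
      rw [h2, h3]
      exact Nat.mul_lt_mul_of_pos_right (Nat.pow_lt_pow_right hq (Nat.lt_succ_self k)) hf0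
    exact ⟨(hf.pow _).add_of_right (degree_lt_degree hlt),
      (natDegree_add_eq_right_of_natDegree_lt hlt).trans h3⟩

theorem card_mul_le_card_sumset (p : ℕ) [Fact p.Prime] (n m : ℕ) (hn : 1 ≤ n)
    {K : Type*} [Field K] [CharP K p] [DecidableEq K] (Fn Fm : Finset K)
    (hFn : ∀ u : K, u ∈ Fn ↔ u ^ p ^ n = u) (hFm : ∀ v : K, v ∈ Fm ↔ v ^ p ^ m = v) :
    Fn.card * Fm.card ≤
      p ^ Nat.gcd m n * ((Fn ×ˢ Fm).image (fun uv : K × K => uv.1 + uv.2)).card := by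
  have hp1 : 1 < p := (Fact.out : p.Prime).one_lt
  have hd : Nat.gcd m n ≠ 0 := (Nat.gcd_pos_of_pos_right _ hn).ne'
  have hq : 1 < p ^ Nat.gcd m n := Nat.one_lt_pow hd hp1
  rw [← Finset.card_product]
  refine Finset.card_le_mul_card_image _ _ fun w hw => ?_
  obtain ⟨⟨u₀, v₀⟩, h₀, rfl⟩ := Finset.mem_image.1 hw
  obtain ⟨hu₀, hv₀⟩ := Finset.mem_product.1 h₀
  rw [hFn] at hu₀
  rw [hFm] at hv₀
  have hP : (X ^ p ^ Nat.gcd m n - X : K[X]) ≠ 0 := FiniteField.X_pow_card_sub_X_ne_zero K hq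
  have hroots : (X ^ p ^ Nat.gcd m n - X : K[X]).roots.toFinset.card ≤ p ^ Nat.gcd m n :=
    (Multiset.toFinset_card_le _).trans ((card_roots' _).trans
      (FiniteField.X_pow_card_sub_X_natDegree_eq K hq).le)
  -- a fibre through `(u₀, v₀)` embeds by `(u, v) ↦ u - u₀` into the roots of `T ^ q - T`
  refine le_trans (Finset.card_le_card_of_injOn (fun uv => uv.1 - u₀) ?_ ?_) hroots
  · rintro ⟨u, v⟩ huv
    simp only [Finset.coe_filter, Finset.mem_product, Set.mem_ofPred_eq, hFn, hFm] at huv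
    obtain ⟨⟨hu, hv⟩, he⟩ := huv
    have hm' : (u - u₀) ^ p ^ m = u - u₀ := by
      rw [show u - u₀ = v₀ - v by linear_combination he, sub_pow_char_pow, hv, hv₀]
    have hn' : (u - u₀) ^ p ^ n = u - u₀ := by rw [sub_pow_char_pow, hu, hu₀]
    simp [hP, pow_gcd_fixed hn' hm']
  · rintro ⟨u, v⟩ huv ⟨u', v'⟩ huv' h
    simp only [Finset.coe_filter, Finset.mem_product, Set.mem_ofPred_eq] at huv huv' h
    have hu : u = u' := by linear_combination h
    have hv : v = v' := by linear_combination huv.2 - huv'.2 - h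
    rw [hu, hv]

theorem prod_eq_trace (p : ℕ) [Fact p.Prime] (n m : ℕ) (hn : 1 ≤ n) (hm : 1 ≤ m)
    {K : Type*} [Field K] [CharP K p] [DecidableEq K] (Fn Fm : Finset K)
    (hFn : ∀ u : K, u ∈ Fn ↔ u ^ p ^ n = u) (hFncard : Fn.card = p ^ n)
    (hFm : ∀ v : K, v ∈ Fm ↔ v ^ p ^ m = v) (hFmcard : Fm.card = p ^ m) :
    ∏ w ∈ (Fn ×ˢ Fm).image (fun uv : K × K => uv.1 + uv.2), (X - C w) =
      ∑ i ∈ Finset.range (n / Nat.gcd m n), (X ^ p ^ m - X : K[X]) ^ (p ^ Nat.gcd m n) ^ i := by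
  have hcard := card_mul_le_card_sumset p n m hn Fn Fm hFn hFm
  have hp1 : 1 < p := (Fact.out : p.Prime).one_lt
  have hdpos : 0 < Nat.gcd m n := Nat.gcd_pos_of_pos_right _ hn
  obtain ⟨b, hb⟩ := Nat.gcd_dvd_right m n
  obtain ⟨a, ha⟩ := Nat.gcd_dvd_left m n
  rw [hFncard, hFmcard] at hcard
  set d := Nat.gcd m n
  set W := (Fn ×ˢ Fm).image (fun uv : K × K => uv.1 + uv.2) with hW
  have hq : 1 < p ^ d := Nat.one_lt_pow hdpos.ne' hp1
  have hqm : 1 < p ^ m := Nat.one_lt_pow (by omega) hp1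
  have hnb : n / d = b := by rw [hb, Nat.mul_div_cancel_left _ hdpos]
  obtain ⟨k, rfl⟩ : ∃ k, b = k + 1 := Nat.exists_eq_succ_of_ne_zero (by rintro rfl; omega)
  have hfdeg : (X ^ p ^ m - X : K[X]).natDegree = p ^ m :=
    FiniteField.X_pow_card_sub_X_natDegree_eq K hqm
  have hfmonic : (X ^ p ^ m - X : K[X]).Monic := by
    apply monic_X_pow_sub
    rw [degree_X]
    exact_mod_cast hqm
  rw [hnb]
  obtain ⟨hmon, hdeg⟩ := monic_natDegree_sum_pow hfmonic (by omega) hq k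
  refine (eq_of_monic_of_dvd_of_natDegree_le (monic_prod_X_sub_C _ _) hmon ?_ ?_).symm
  · refine Finset.prod_dvd_of_coprime (fun x _ y _ hxy => ?_) fun w hw => ?_
    · exact isCoprime_X_sub_C_of_isUnit_sub (sub_ne_zero.2 hxy).isUnit
    · obtain ⟨⟨u, v⟩, huv, rfl⟩ := Finset.mem_image.1 hw
      obtain ⟨hu, hv⟩ := Finset.mem_product.1 huv
      rw [hFn] at hu
      rw [hFm] at hv
      rw [dvd_iff_isRoot, IsRoot.def, eval_finsetSum]
      have hf : (u + v) ^ p ^ m - (u + v) = u ^ p ^ m - u := by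
        rw [add_pow_char_pow, hv]; ring
      -- the trace of `u` is fixed by the `q`-power map, hence by its iterate `x ↦ x ^ p ^ m`
      have hs := trace_pow_sub p d (k + 1) u
      rw [← pow_mul p d (k + 1), ← hb, hu, sub_self, sub_eq_zero] at hs
      have hs' := iterate_pow_fixed hs a
      rw [← pow_mul, ← ha, sum_pow_char_pow] at hs'
      simp only [eval_pow, eval_sub, eval_X, hf]
      rw [← sub_eq_zero, ← Finset.sum_sub_distrib] at hs'
      rw [← hs']
      refine Finset.sum_congr rfl fun i _ => ?_
      rw [← pow_mul p d i, sub_pow_char_pow, ← pow_mul, ← pow_mul, mul_comm]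
  · rw [natDegree_finsetProd_X_sub_C_eq_card, hdeg, hfdeg]
    refine Nat.le_of_mul_le_mul_left (le_trans (le_of_eq ?_) hcard) (by omega : 0 < p ^ d)
    rw [← mul_assoc, ← pow_succ', ← pow_mul, ← hb]


noncomputable section

/-- Let `p` be prime, `m, n ≥ 1`, `d = gcd(m,n)`, and let `K` be a field of characteristic `p`
containing `𝔽_(p^lcm(n,m))`; this containment is encoded by the finite subsets
`Fn = {u : u^(p^n) = u}` and `Fm = {v : v^(p^m) = v}` of `K` having cardinalities `p^n` and
`p^m` respectively (so `Fn` and `Fm` are copies of `𝔽_(p^n)` and `𝔽_(p^m)` inside `K`).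
Let `φ(T) = ∏_{w ∈ 𝔽_(p^n) + 𝔽_(p^m)} (T - w)`, the monic polynomial whose simple roots are
the elements of the additive subgroup `𝔽_(p^n) + 𝔽_(p^m)` of `K`. Then
`φ(T)^(p^d) - φ(T) = (T^(p^m) - T)^(p^n) - (T^(p^m) - T)`. -/
theorem phi_pow_pd_sub_phi (p : ℕ) (hp : p.Prime) (n m : ℕ) (hn : 1 ≤ n) (hm : 1 ≤ m)
    (K : Type*) [Field K] [CharP K p] [DecidableEq K]
    (Fn Fm : Finset K)
    (hFn : ∀ u : K, u ∈ Fn ↔ u ^ p ^ n = u) (hFncard : Fn.card = p ^ n)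
    (hFm : ∀ v : K, v ∈ Fm ↔ v ^ p ^ m = v) (hFmcard : Fm.card = p ^ m) :
    (∏ w ∈ (Fn ×ˢ Fm).image (fun uv : K × K => uv.1 + uv.2),
        (Polynomial.X - Polynomial.C w)) ^ p ^ Nat.gcd m n -
      ∏ w ∈ (Fn ×ˢ Fm).image (fun uv : K × K => uv.1 + uv.2),
        (Polynomial.X - Polynomial.C w) =
    ((Polynomial.X : Polynomial K) ^ p ^ m - Polynomial.X) ^ p ^ n -
      ((Polynomial.X : Polynomial K) ^ p ^ m - Polynomial.X) := by
  have : Fact p.Prime := ⟨hp⟩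
  rw [prod_eq_trace p n m hn hm Fn Fm hFn hFncard hFm hFmcard, trace_pow_sub, ← pow_mul,
    Nat.mul_div_cancel' (Nat.gcd_dvd_right m n)]
end
end

section
/- Let p be a prime, let m, n ≥ 1 be integers, and let d = gcd(m,n). In the polynomial ring 𝔽_p[A,B], the resultant with respect to x of the polynomials x^{p^n} - x - A and x^{p^m} - x - B (regarded as polynomials in x with coefficients in 𝔽_p[A,B]) equals Σ_{i=1}^{m/d} A^{p^{id}} - Σ_{i=1}^{n/d} B^{p^{id}}. -/
/-!
Write `f_{k,a} = X^(p^k) - X - a` over any commutative ring `R` of characteristic `p`, and let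
`R(n,a; m,b)` be the resultant of `f_{n,a}` and `f_{m,b}` in formal degrees `p^n` and `p^m`.
The formula is proved for all `n, m ≥ 0`, not both zero, and all `a, b ∈ R` by running Euclid's
algorithm on the exponents. Since raising to the power `p^k` is additive,
`f_{k+m,a} - f_{m,b}^(p^k) = f_{k, a - b^(p^k)}`, and `f_{m,b}`
is monic of degree `p^m` when `m ≥ 1`, so
`R(k+m, a; m, b) = R(k, a - b^(p^k); m, b)`;
the sign from lowering the formal degree is trivial because `(-1)^(p^k) = -1` in `R`. The same
identity makes `R` antisymmetric under swapping the two polynomials, and the right-hand side of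
the formula obeys the same two rules (`artinSchreierSum_add`). The algorithm stops at `n = 0`,
where `f_{0,a} = -a` is a constant of formal degree `1`. Allowing `a` and `b` to vary over `R` is
what makes the induction close.

The determinant of the explicit Sylvester matrix agrees with `Polynomial.resultant`
(`resultant_eq_polynomial_resultant`): the two matrices differ by a transpose and by reversing
the order of rows and columns simultaneously.
-/

noncomputable section

/-- The Sylvester matrix of two polynomials `f` and `g` over a commutative ring `R`,
regarded as having degrees `m` and `n` respectively: the `(n+m) × (n+m)` matrix whose first
`n` rows are the shifted coefficient sequences of `f` and whose last `m` rows are the shifted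
coefficient sequences of `g`. -/
def sylvester {R : Type*} [CommRing R] (f g : Polynomial R) (m n : ℕ) :
    Matrix (Fin (n + m)) (Fin (n + m)) R :=
  Matrix.of fun i j =>
    if (i : ℕ) < n then
      if (i : ℕ) ≤ (j : ℕ) ∧ (j : ℕ) ≤ (i : ℕ) + m then f.coeff (m + i - j) else 0
    else
      if (i : ℕ) - n ≤ (j : ℕ) ∧ (j : ℕ) ≤ ((i : ℕ) - n) + n then g.coeff (n + ((i : ℕ) - n) - j)
      else 0

/-- The resultant of two polynomials `f` and `g` of degrees `m` and `n` over a commutative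
ring `R`: the determinant of their Sylvester matrix, an element of `R`. -/
def resultant {R : Type*} [CommRing R] (f g : Polynomial R) (m n : ℕ) : R :=
  (sylvester f g m n).det

/-- Transposing and reversing rows and columns turns the explicit Sylvester matrix (descending
coefficients in rows) into Mathlib's (ascending coefficients in columns). -/
theorem resultant_eq_polynomial_resultant {R : Type*} [CommRing R] (f g : Polynomial R)
    (m n : ℕ) : resultant f g m n = Polynomial.resultant f g m n := by
  let e : Fin (n + m) ≃ Fin (m + n) := Fin.revPerm.trans (finCongr (add_comm n m))
  have h : sylvester f g m n = (Polynomial.sylvester f g m n).transpose.submatrix e e := by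
    ext i j
    obtain ⟨i', rfl⟩ := e.symm.surjective i
    have hi : ((e.symm i' : Fin (n + m)) : ℕ) = n + m - (i' + 1) := by
      simp [e]
    have hj : ((e j : Fin (m + n)) : ℕ) = n + m - (j + 1) := by
      simp [e]
    have hjl := j.isLt
    simp only [sylvester, Matrix.of_apply, Matrix.submatrix_apply, Matrix.transpose_apply,
      Equiv.apply_symm_apply, Polynomial.sylvester, hi, hj, Set.mem_Icc]
    induction i' using Fin.addCases with
    | left k =>
      have hk := k.isLt
      simp only [Fin.addCases_left, Fin.val_castAdd]
      rw [if_neg (by omega)]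
      congr 1
      · apply propext; omega
      · congr 1; omega
    | right k =>
      have hk := k.isLt
      simp only [Fin.addCases_right, Fin.val_natAdd]
      rw [if_pos (by omega)]
      congr 1
      · apply propext; omega
      · congr 1; omega
  rw [resultant, Polynomial.resultant, h, Matrix.det_submatrix_equiv_self, Matrix.det_transpose]

section ArtinSchreier

variable {R : Type*} [CommRing R]

/-- The polynomial `X^(p^k) - X - a`. For `k = 0` it is the constant `-a`, although the formal
degree used for it below is still `p^0 = 1`. -/
def artinSchreierPoly (p k : ℕ) (a : R) : Polynomial R :=
  Polynomial.X ^ p ^ k - Polynomial.X - Polynomial.C a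

/-- The sum `∑_{i=1}^{r} a^(p^(i d))`. -/
def artinSchreierSum (p d r : ℕ) (a : R) : R :=
  ∑ i ∈ Finset.range r, a ^ p ^ ((i + 1) * d)

theorem natDegree_artinSchreierPoly_le {p : ℕ} (hp : p.Prime) (k : ℕ) (a : R) :
    (artinSchreierPoly p k a).natDegree ≤ p ^ k := by
  have h1 : 1 ≤ p ^ k := Nat.one_le_pow _ _ hp.pos
  rw [artinSchreierPoly, Polynomial.natDegree_sub_C]
  refine (Polynomial.natDegree_sub_le _ _).trans (max_le (Polynomial.natDegree_X_pow_le _) ?_)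
  exact Polynomial.natDegree_X_le.trans h1

theorem coeff_artinSchreierPoly {p : ℕ} (hp : p.Prime) {k : ℕ} (hk : 1 ≤ k) (a : R) :
    (artinSchreierPoly p k a).coeff (p ^ k) = 1 := by
  have h1 : 1 < p ^ k := Nat.one_lt_pow (by omega) hp.one_lt
  simp [artinSchreierPoly, Polynomial.coeff_X, Polynomial.coeff_C, h1.ne, hp.ne_zero]

theorem artinSchreierSum_sub {p : ℕ} [Fact p.Prime] [CharP R p] (d r : ℕ) (a b : R) :
    artinSchreierSum p d r (a - b) = artinSchreierSum p d r a - artinSchreierSum p d r b := by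
  simp only [artinSchreierSum, sub_pow_char_pow, Finset.sum_sub_distrib]

theorem artinSchreierSum_add (p d r s : ℕ) (b : R) :
    artinSchreierSum p d (r + s) b =
      artinSchreierSum p d r b + artinSchreierSum p d s (b ^ p ^ (r * d)) := by
  rw [artinSchreierSum, Finset.sum_range_add]
  congr 1
  refine Finset.sum_congr rfl fun i _ => ?_
  rw [← pow_mul, ← pow_add]
  congr 2
  ring

/-- The resultant in formal degrees `p^n`, `p^m` satisfies the formula; the predicate quantifies
over all constant terms because the Euclidean step changes them. -/
def HasArtinSchreierResultant (R : Type*) [CommRing R] (p n m : ℕ) : Prop :=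
  ∀ a b : R,
    Polynomial.resultant (artinSchreierPoly p n a) (artinSchreierPoly p m b) (p ^ n) (p ^ m) =
      artinSchreierSum p (m.gcd n) (m / m.gcd n) a - artinSchreierSum p (m.gcd n) (n / m.gcd n) b

variable {p : ℕ} [hp : Fact p.Prime] [CharP R p]

theorem HasArtinSchreierResultant.symm {n m : ℕ} (h : HasArtinSchreierResultant R p n m) :
    HasArtinSchreierResultant R p m n := by
  intro a b
  rw [Polynomial.resultant_comm, h b a, Nat.gcd_comm, ← pow_add, neg_one_pow_char_pow]
  ring

/-- The case `n = 0`, where the first polynomial is the constant `-a` in formal degree `1`. -/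
theorem hasArtinSchreierResultant_zero {m : ℕ} (hm : 1 ≤ m) :
    HasArtinSchreierResultant R p 0 m := by
  intro a b
  have h0 : artinSchreierPoly p 0 a = Polynomial.C (-a) := by simp [artinSchreierPoly]
  rw [h0, Polynomial.resultant_C_left, coeff_artinSchreierPoly hp.out hm, neg_pow a,
    pow_zero, one_mul, neg_one_pow_char_pow]
  simp [artinSchreierSum, Nat.div_self hm]

/-- One step of Euclid's algorithm on the exponents. -/
theorem HasArtinSchreierResultant.add {n m : ℕ} (hm : 1 ≤ m)
    (h : HasArtinSchreierResultant R p n m) : HasArtinSchreierResultant R p (n + m) m := by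
  intro a b
  have hfg : artinSchreierPoly p (n + m) a = artinSchreierPoly p n (a - b ^ p ^ n) +
      artinSchreierPoly p m b * artinSchreierPoly p m b ^ (p ^ n - 1) := by
    rw [mul_pow_sub_one (pow_pos hp.out.pos n).ne']
    simp only [artinSchreierPoly, sub_pow_char_pow, Polynomial.C_sub, Polynomial.C_pow,
      ← pow_mul, ← pow_add, add_comm n m]
    ring
  have hdeg := natDegree_artinSchreierPoly_le hp.out m b
  have hpos : 1 ≤ p ^ n := Nat.one_le_pow _ _ hp.out.pos
  have hq : (artinSchreierPoly p m b ^ (p ^ n - 1)).natDegree + p ^ m ≤ p ^ (n + m) := by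
    calc _ ≤ (p ^ n - 1) * p ^ m + p ^ m :=
          Nat.add_le_add_right (Polynomial.natDegree_pow_le_of_le _ hdeg) _
      _ = p ^ (n + m) := by
          rw [← Nat.succ_mul, Nat.succ_eq_add_one, Nat.sub_add_cancel hpos, pow_add]
  obtain ⟨k, hk⟩ : ∃ k, p ^ (n + m) = p ^ n + k :=
    Nat.exists_eq_add_of_le (Nat.pow_le_pow_right hp.out.pos (Nat.le_add_right n m))
  -- `(-1)^k` is trivial because both `p^(n+m)` and `p^n` act on `-1` as odd exponents.
  have hsign : (-1 : R) ^ k = 1 := by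
    have h1 : (-1 : R) ^ p ^ (n + m) = -1 := neg_one_pow_char_pow ..
    rw [hk, pow_add, neg_one_pow_char_pow] at h1
    simpa using h1
  rw [hfg, Polynomial.resultant_add_mul_left _ _ _ _ _ hq hdeg, hk,
    Polynomial.resultant_add_left_deg _ _ _ _ _ (natDegree_artinSchreierPoly_le hp.out n _),
    coeff_artinSchreierPoly hp.out hm, mul_comm (p ^ m) k, pow_mul, hsign, h, one_pow, one_pow,
    one_mul, one_mul]
  have hg : m.gcd (n + m) = m.gcd n := by simp
  have hdvd : m.gcd n ∣ n := Nat.gcd_dvd_right m n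
  rw [hg, Nat.add_div_of_dvd_right hdvd, artinSchreierSum_sub, artinSchreierSum_add,
    Nat.div_mul_cancel hdvd]
  ring

theorem hasArtinSchreierResultant (n m : ℕ) (h : 1 ≤ n + m) :
    HasArtinSchreierResultant R p n m := by
  induction hs : n + m using Nat.strong_induction_on generalizing n m with
  | _ s ih =>
    wlog hle : m ≤ n generalizing n m
    · exact (this m n (by omega) (by omega) (by omega)).symm
    rcases Nat.eq_zero_or_pos m with rfl | hm
    · exact (hasArtinSchreierResultant_zero (by omega)).symm
    · obtain ⟨k, rfl⟩ := Nat.exists_eq_add_of_le' hle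
      exact (ih (k + m) (by omega) k m (by omega) rfl).add hm

end ArtinSchreier

/-- Let `p` be prime, `m, n ≥ 1`, `d = gcd(m,n)`. In `𝔽_p[A,B]` (with `A = X 0`, `B = X 1`),
the resultant with respect to `x` of `x^(p^n) - x - A` and `x^(p^m) - x - B` equals
`Σ_{i=1}^{m/d} A^(p^(i·d)) - Σ_{i=1}^{n/d} B^(p^(i·d))`. -/
theorem resultant_artin_schreier (p : ℕ) (hp : p.Prime) (n m : ℕ) (hn : 1 ≤ n) (hm : 1 ≤ m) :
    resultant
        (Polynomial.X ^ p ^ n - Polynomial.X -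
          Polynomial.C (MvPolynomial.X 0 : MvPolynomial (Fin 2) (ZMod p)))
        (Polynomial.X ^ p ^ m - Polynomial.X -
          Polynomial.C (MvPolynomial.X 1 : MvPolynomial (Fin 2) (ZMod p)))
        (p ^ n) (p ^ m) =
      ∑ i ∈ Finset.range (m / Nat.gcd m n),
          (MvPolynomial.X 0 : MvPolynomial (Fin 2) (ZMod p)) ^ p ^ ((i + 1) * Nat.gcd m n) -
        ∑ i ∈ Finset.range (n / Nat.gcd m n),
          (MvPolynomial.X 1 : MvPolynomial (Fin 2) (ZMod p)) ^ p ^ ((i + 1) * Nat.gcd m n) := by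
  have : Fact p.Prime := ⟨hp⟩
  rw [resultant_eq_polynomial_resultant]
  exact hasArtinSchreierResultant n m (by omega) _ _
end
end
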